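/- arXiv:1805.10072 — 4 statements merged into one kernel-verified Lean document; each statement's English description precedes it below -/
import Mathlib

section
/- Let n ≥ 1 be an integer and let s₁ satisfy 1/2 − 1/(2n) < s₁ < 1/2. Then there exists a constant C(s₁,n) > 0 such that for every family of complex numbers (f_k)_{k ∈ ℤ^{2n}} with A := sup_{k} |f_k| < ∞ and every ψ ∈ ℂ^ℤ with ‖ψ‖_{H^{s₁}} < ∞, one has ∑_{k ∈ ℤ^{2n} satisfying the zero-momentum condition} |f_k| · ∏_{i=1}^{2n} |ψ_{k_i}| ≤ C(s₁,n) · A · ‖ψ‖_{H^{s₁}}^{2n} (in particular the series converges). -/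
/-!
For `N` nonnegative numbers, `∏ᵢ cᵢ ^ ((N - 1) / N) = ∏ᵢ (∏_{j ≠ i} cⱼ) ^ (1 / N)`. Hölder's
inequality with `N` exponents `N` therefore bounds a sum of such products by the sums of the
`∏_{j ≠ i} cⱼ`, and if every coordinate of a summation point is a function of the others, each of
these sums is at most a product of one-dimensional sums (a discrete Loomis-Whitney inequality). On
the zero-momentum hyperplane in `ℤ^{2n}` this gives a bound by `‖ψ‖_{ℓ^p}^{2n}`, where
`p = 2n / (2n - 1)` is conjugate to `2n`. Finally `H^s ⊆ ℓ^p` as soon as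
`s > 1 / p - 1 / 2 = 1 / 2 - 1 / (2n)`, again by Hölder.
-/

open Function
open scoped ENNReal NNReal

theorem summable_and_tsum_norm_mul_le {α F : Type*} [SeminormedAddCommGroup F] {f : α → F} {A : ℝ}
    (hf : ∀ a, ‖f a‖ ≤ A) {g : α → ℝ} (hg : ∀ a, 0 ≤ g a) (hsum : Summable g) :
    (Summable fun a => ‖f a‖ * g a) ∧ ∑' a, ‖f a‖ * g a ≤ A * ∑' a, g a := by
  have hle : ∀ a, ‖f a‖ * g a ≤ A * g a := fun a => mul_le_mul_of_nonneg_right (hf a) (hg a)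
  have hsummable := Summable.of_nonneg_of_le (fun a => mul_nonneg (norm_nonneg _) (hg a)) hle
    (hsum.mul_left A)
  exact ⟨hsummable, (hsummable.tsum_le_tsum hle (hsum.mul_left A)).trans_eq tsum_mul_left⟩

section DiscreteLoomisWhitney

theorem tsum_prod_rpow_le_prod_tsum_rpow {α ι : Type*} (t : Finset ι) (f : ι → α → ℝ≥0∞)
    {w : ι → ℝ} (hw : ∑ i ∈ t, w i = 1) (hw₀ : ∀ i ∈ t, 0 ≤ w i) :
    ∑' a, ∏ i ∈ t, f i a ^ w i ≤ ∏ i ∈ t, (∑' a, f i a) ^ w i := by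
  let _ : MeasurableSpace α := ⊤
  simpa only [MeasureTheory.lintegral_count] using
    ENNReal.lintegral_prod_norm_pow_le (μ := MeasureTheory.Measure.count) t
      (fun i _ => (measurable_from_top (f := f i)).aemeasurable) hw hw₀

theorem tsum_pi_prod_le_prod_tsum {ι : Type*} [Fintype ι] {α : ι → Type*}
    (f : ∀ i, α i → ℝ≥0∞) :
    ∑' x : ∀ i, α i, ∏ i, f i (x i) ≤ ∏ i, ∑' a, f i a := by
  classical
  refine ENNReal.summable.tsum_le_of_sum_le fun F => ?_
  let T : ∀ i, Finset (α i) := fun i => F.image fun x => x i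
  have hF : F ⊆ Fintype.piFinset T := fun x hx =>
    Fintype.mem_piFinset.2 fun i => Finset.mem_image_of_mem _ hx
  calc ∑ x ∈ F, ∏ i, f i (x i)
      ≤ ∑ x ∈ Fintype.piFinset T, ∏ i, f i (x i) := Finset.sum_le_sum_of_subset hF
    _ = ∏ i, ∑ a ∈ T i, f i a := (Finset.prod_univ_sum T f).symm
    _ ≤ ∏ i, ∑' a, f i a := Finset.prod_le_prod' fun i _ => ENNReal.sum_le_tsum (T i)

variable {ι : Type*} [Fintype ι]

theorem prod_prod_subtype_ne {M : Type*} [CommMonoid M] [DecidableEq ι] (c : ι → M) :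
    ∏ i, ∏ j : {j // j ≠ i}, c j.1 = ∏ j, c j ^ (Fintype.card ι - 1) := by
  have herase : ∀ i, ∏ j : {j // j ≠ i}, c j.1 = ∏ j ∈ Finset.univ.erase i, c j := fun i =>
    (Finset.prod_subtype _ (by simp) c).symm
  simp_rw [herase]
  rw [Finset.prod_comm' (t' := Finset.univ) (s' := fun j => Finset.univ.erase j)
    (by simp [eq_comm])]
  simp [Finset.card_erase_of_mem]

theorem prod_rpow_one_div_eq_prod_prod_ne_rpow [DecidableEq ι] {p : ℝ}
    (hp : (Fintype.card ι : ℝ).HolderConjugate p) (c : ι → ℝ≥0∞) :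
    ∏ i, c i ^ (1 / p) = ∏ i, (∏ j : {j // j ≠ i}, c j.1) ^ (1 / (Fintype.card ι : ℝ)) := by
  have hcard : 1 ≤ Fintype.card ι := by exact_mod_cast hp.lt.le
  have hexp : 1 / p = 1 / (Fintype.card ι : ℝ) * (Fintype.card ι - 1 : ℕ) := by
    have := hp.ne_zero
    rw [one_div, ← hp.one_sub_inv, Nat.cast_sub hcard]
    field_simp
    simp
  simp_rw [← ENNReal.prod_rpow_of_nonneg hp.one_div_nonneg]
  rw [prod_prod_subtype_ne fun i => c i ^ (1 / (Fintype.card ι : ℝ))]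
  exact Finset.prod_congr rfl fun i _ => by rw [hexp, ENNReal.rpow_mul, ENNReal.rpow_natCast]

variable {S : Type*} {α : ι → Type*} {κ : S → ∀ i, α i} {p : ℝ}

theorem tsum_prod_le_prod_tsum_rpow_of_injective_ne
    (hκ : ∀ i, Injective fun x (j : {j // j ≠ i}) => κ x j.1)
    (hp : (Fintype.card ι : ℝ).HolderConjugate p) (f : ∀ i, α i → ℝ≥0∞) :
    ∑' x, ∏ i, f i (κ x i) ≤ ∏ i, (∑' a, f i a ^ p) ^ (1 / p) := by
  classical
  have hroot : ∀ y : ℝ≥0∞, (y ^ p) ^ (1 / p) = y := fun y => by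
    rw [one_div, ENNReal.rpow_rpow_inv hp.symm.ne_zero]
  have hfibre : ∀ i, ∑' x, ∏ j : {j // j ≠ i}, f j.1 (κ x j.1) ^ p
      ≤ ∏ j : {j // j ≠ i}, ∑' a, f j.1 a ^ p := fun i =>
    (ENNReal.tsum_comp_le_tsum_of_injective (hκ i) fun y => ∏ j, f j.1 (y j) ^ p).trans
      (tsum_pi_prod_le_prod_tsum fun (j : {j // j ≠ i}) a => f j.1 a ^ p)
  calc ∑' x, ∏ i, f i (κ x i)
      = ∑' x, ∏ i, (∏ j : {j // j ≠ i}, f j.1 (κ x j.1) ^ p) ^ (1 / (Fintype.card ι : ℝ)) := by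
        refine tsum_congr fun x => ?_
        rw [← prod_rpow_one_div_eq_prod_prod_ne_rpow hp fun i => f i (κ x i) ^ p]
        simp_rw [hroot]
    _ ≤ ∏ i, (∑' x, ∏ j : {j // j ≠ i}, f j.1 (κ x j.1) ^ p) ^ (1 / (Fintype.card ι : ℝ)) :=
        tsum_prod_rpow_le_prod_tsum_rpow Finset.univ
          (fun i x => ∏ j : {j // j ≠ i}, f j.1 (κ x j.1) ^ p) (by simp [hp.ne_zero])
          fun _ _ => hp.one_div_nonneg
    _ ≤ ∏ i, (∏ j : {j // j ≠ i}, ∑' a, f j.1 a ^ p) ^ (1 / (Fintype.card ι : ℝ)) :=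
        Finset.prod_le_prod' fun i _ => ENNReal.rpow_le_rpow (hfibre i) hp.one_div_nonneg
    _ = ∏ i, (∑' a, f i a ^ p) ^ (1 / p) :=
        (prod_rpow_one_div_eq_prod_prod_ne_rpow hp fun i => ∑' a, f i a ^ p).symm

theorem summable_and_tsum_prod_le_prod_tsum_rpow_of_injective_ne
    (hκ : ∀ i, Injective fun x (j : {j // j ≠ i}) => κ x j.1)
    (hp : (Fintype.card ι : ℝ).HolderConjugate p) {f : ∀ i, α i → ℝ} (hf : ∀ i a, 0 ≤ f i a)
    (hsum : ∀ i, Summable fun a => f i a ^ p) :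
    (Summable fun x => ∏ i, f i (κ x i)) ∧
      ∑' x, ∏ i, f i (κ x i) ≤ ∏ i, (∑' a, f i a ^ p) ^ (1 / p) := by
  lift f to ∀ i, α i → ℝ≥0 using hf
  beta_reduce at *
  norm_cast at *
  have hle : ∑' x, ((∏ i, f i (κ x i) : ℝ≥0) : ℝ≥0∞) ≤
      ((∏ i, (∑' a, f i a ^ p) ^ (1 / p) : ℝ≥0) : ℝ≥0∞) := by
    have h := tsum_prod_le_prod_tsum_rpow_of_injective_ne hκ hp fun i a => (f i a : ℝ≥0∞)
    simpa only [← ENNReal.coe_rpow_of_nonneg _ hp.symm.nonneg, ← ENNReal.coe_tsum (hsum _),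
      ← ENNReal.coe_rpow_of_nonneg _ hp.symm.one_div_nonneg, ← ENNReal.ofNNReal_finsetProd] using h
  have hsummable := ENNReal.tsum_coe_ne_top_iff_summable.1
    (ne_top_of_le_ne_top ENNReal.coe_ne_top hle)
  rw [← ENNReal.coe_tsum hsummable, ENNReal.coe_le_coe] at hle
  exact ⟨hsummable, hle⟩

end DiscreteLoomisWhitney

section ZeroMomentum

theorem eq_of_sum_eq_of_forall_ne {ι M : Type*} [Fintype ι] [AddCancelCommMonoid M] {x y : ι → M}
    {i : ι} (hne : ∀ j, j ≠ i → x j = y j) (hsum : ∑ j, x j = ∑ j, y j) : x = y := by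
  classical
  have hi : x i = y i := by
    rw [Fintype.sum_eq_add_sum_subtype_ne x i, Fintype.sum_eq_add_sum_subtype_ne y i,
      Fintype.sum_congr _ _ fun j : {j // j ≠ i} => hne j j.2] at hsum
    exact add_right_cancel hsum
  exact funext fun j => (eq_or_ne j i).elim (fun h => h ▸ hi) (hne j)

/-- Pairs of families satisfying the zero-momentum condition, the two sides of which are
indexed by separate types. -/
abbrev ZeroMomentum (ι κ G : Type*) [Fintype ι] [Fintype κ] [AddCommMonoid G] :=
  {k : (ι → G) × (κ → G) // ∑ i, k.1 i = ∑ i, k.2 i}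

variable {ι κ G : Type*} [Fintype ι] [Fintype κ] [AddCancelCommMonoid G]

theorem ZeroMomentum.injective_sumElim_ne (i : ι ⊕ κ) :
    Injective fun (k : ZeroMomentum ι κ G) (j : {j // j ≠ i}) => Sum.elim k.1.1 k.1.2 j.1 := by
  rintro ⟨⟨a, b⟩, hab⟩ ⟨⟨a', b'⟩, hab'⟩ h
  -- Exchanging `b` and `b'` turns the two conditions into the equality of two sums over `ι ⊕ κ`.
  have hswap : Sum.elim a b' = Sum.elim a' b := by
    refine eq_of_sum_eq_of_forall_ne (i := i) (fun j hj => ?_) ?_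
    · cases j with
      | inl j => exact congrFun h ⟨.inl j, hj⟩
      | inr j => exact (congrFun h ⟨.inr j, hj⟩).symm
    · simp only [Fintype.sum_sum_type, Sum.elim_inl, Sum.elim_inr]
      rw [show ∑ j, a j = ∑ j, b j from hab, ← show ∑ j, a' j = ∑ j, b' j from hab', add_comm]
  obtain rfl : a = a' := funext fun j => congrFun hswap (.inl j)
  obtain rfl : b' = b := funext fun j => congrFun hswap (.inr j)
  rfl

theorem ZeroMomentum.summable_and_tsum_prod_le {p : ℝ}
    (hp : (Fintype.card (ι ⊕ κ) : ℝ).HolderConjugate p) {f : G → ℝ} (hf : ∀ a, 0 ≤ f a)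
    (hsum : Summable fun a => f a ^ p) :
    (Summable fun k : ZeroMomentum ι κ G => (∏ i, f (k.1.1 i)) * ∏ i, f (k.1.2 i)) ∧
      ∑' k : ZeroMomentum ι κ G, (∏ i, f (k.1.1 i)) * ∏ i, f (k.1.2 i) ≤
        ((∑' a, f a ^ p) ^ (1 / p)) ^ Fintype.card (ι ⊕ κ) := by
  simpa only [Fintype.prod_sum_type, Sum.elim_inl, Sum.elim_inr, Finset.prod_const,
    Finset.card_univ, Fintype.card_sum, pow_add] using
    summable_and_tsum_prod_le_prod_tsum_rpow_of_injective_ne injective_sumElim_ne hp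
      (fun _ => hf) (fun _ => hsum)

end ZeroMomentum

section SobolevEmbedding

theorem summable_and_tsum_rpow_le_of_weight {α : Type*} {p q r : ℝ} (h : q.HolderTriple r p)
    {w f : α → ℝ} (hw : ∀ a, 0 < w a) (hf : ∀ a, 0 ≤ f a)
    (hsum_w : Summable fun a => w a ^ (-(r / q))) (hsum_f : Summable fun a => w a * f a ^ q) :
    (Summable fun a => f a ^ p) ∧
      (∑' a, f a ^ p) ^ (1 / p) ≤
        (∑' a, w a * f a ^ q) ^ (1 / q) * (∑' a, w a ^ (-(r / q))) ^ (1 / r) := by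
  have hsplit : ∀ a, w a ^ (1 / q) * f a * w a ^ (-(1 / q)) = f a := fun a => by
    rw [mul_right_comm, ← Real.rpow_add (hw a), add_neg_cancel, Real.rpow_zero, one_mul]
  have hleft : ∀ a, (w a ^ (1 / q) * f a) ^ q = w a * f a ^ q := fun a => by
    rw [Real.mul_rpow (Real.rpow_nonneg (hw a).le _) (hf a), one_div,
      Real.rpow_inv_rpow (hw a).le h.ne_zero]
  have hright : ∀ a, (w a ^ (-(1 / q))) ^ r = w a ^ (-(r / q)) := fun a => by
    rw [← Real.rpow_mul (hw a).le]
    ring_nf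
  have hleft_nonneg : ∀ a, 0 ≤ w a ^ (1 / q) * f a := fun a =>
    mul_nonneg (Real.rpow_nonneg (hw a).le _) (hf a)
  have hright_nonneg : ∀ a, 0 ≤ w a ^ (-(1 / q)) := fun a => Real.rpow_nonneg (hw a).le _
  simp_rw [← hleft] at hsum_f ⊢
  simp_rw [← hright] at hsum_w ⊢
  exact ⟨by simpa only [hsplit] using
      Real.summable_Lr_of_Lp_Lq_of_nonneg h hleft_nonneg hright_nonneg hsum_f hsum_w,
    by simpa only [hsplit] using
      Real.Lr_le_Lp_mul_Lq_tsum_of_nonneg h hleft_nonneg hright_nonneg hsum_f hsum_w⟩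

theorem summable_one_add_int_sq_rpow_neg {r : ℝ} (hr : 1 / 2 < r) :
    Summable fun k : ℤ => (1 + (k : ℝ) ^ 2) ^ (-r) := by
  refine Summable.of_norm_bounded_eventually
    (Real.summable_abs_int_rpow (show 1 < 2 * r by linarith)) ?_
  filter_upwards [(Set.finite_singleton (0 : ℤ)).compl_mem_cofinite] with k hk
  have hk₀ : (0 : ℝ) < |(k : ℝ)| := abs_pos.2 (Int.cast_ne_zero.2 hk)
  calc ‖(1 + (k : ℝ) ^ 2) ^ (-r)‖ = (1 + |(k : ℝ)| ^ 2) ^ (-r) := by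
        rw [Real.norm_of_nonneg (by positivity), sq_abs]
    _ ≤ (|(k : ℝ)| ^ 2) ^ (-r) :=
        Real.rpow_le_rpow_of_nonpos (by positivity) (by linarith) (by linarith)
    _ = |(k : ℝ)| ^ (-(2 * r)) := by
        rw [← Real.rpow_two, ← Real.rpow_mul hk₀.le, mul_neg]

variable {E : Type*} [SeminormedAddCommGroup E]

theorem summable_and_tsum_norm_sq_le_sobolev {s : ℝ} (hs : 0 ≤ s) {ψ : ℤ → E}
    (hψ : Summable fun k : ℤ => (1 + (k : ℝ) ^ 2) ^ s * ‖ψ k‖ ^ 2) :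
    (Summable fun k => ‖ψ k‖ ^ 2) ∧
      ∑' k, ‖ψ k‖ ^ 2 ≤ ∑' k : ℤ, (1 + (k : ℝ) ^ 2) ^ s * ‖ψ k‖ ^ 2 := by
  have hle : ∀ k : ℤ, ‖ψ k‖ ^ 2 ≤ (1 + (k : ℝ) ^ 2) ^ s * ‖ψ k‖ ^ 2 := fun k =>
    le_mul_of_one_le_left (by positivity) (Real.one_le_rpow (by simp [sq_nonneg]) hs)
  have hsum := Summable.of_nonneg_of_le (fun k => by positivity) hle hψ
  exact ⟨hsum, hsum.tsum_le_tsum hle hψ⟩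

theorem exists_summable_and_tsum_norm_rpow_le_sobolev (E : Type*) [SeminormedAddCommGroup E]
    {p s : ℝ} (hp₀ : 0 < p) (hp₂ : p ≤ 2) (hs : 1 / p - 1 / 2 < s) :
    ∃ C > (0 : ℝ), ∀ ψ : ℤ → E, (Summable fun k : ℤ => (1 + (k : ℝ) ^ 2) ^ s * ‖ψ k‖ ^ 2) →
      (Summable fun k => ‖ψ k‖ ^ p) ∧
        (∑' k, ‖ψ k‖ ^ p) ^ (1 / p) ≤
          C * √(∑' k : ℤ, (1 + (k : ℝ) ^ 2) ^ s * ‖ψ k‖ ^ 2) := by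
  rcases hp₂.eq_or_lt with rfl | hp₂
  · refine ⟨1, one_pos, fun ψ hψ => ?_⟩
    obtain ⟨hsum, hle⟩ := summable_and_tsum_norm_sq_le_sobolev (by linarith) hψ
    simp only [Real.rpow_two, ← Real.sqrt_eq_rpow, one_mul]
    exact ⟨hsum, Real.sqrt_le_sqrt hle⟩
  · have hr : 0 < 1 / p - 1 / 2 := sub_pos.2 (one_div_lt_one_div_of_lt hp₀ hp₂)
    set r := (1 / p - 1 / 2)⁻¹ with hr_def
    have htriple : (2 : ℝ).HolderTriple r p :=
      ⟨by rw [hr_def, inv_inv]; ring, two_pos, inv_pos.2 hr⟩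
    have hpow : ∀ k : ℤ, ((1 + (k : ℝ) ^ 2) ^ s) ^ (-(r / 2)) =
        (1 + (k : ℝ) ^ 2) ^ (-(s * r / 2)) := fun k => by
      rw [← Real.rpow_mul (by positivity)]
      ring_nf
    have hsum_w : Summable fun k : ℤ => ((1 + (k : ℝ) ^ 2) ^ s) ^ (-(r / 2)) := by
      simp_rw [hpow]
      refine summable_one_add_int_sq_rpow_neg ?_
      have : 1 < s * r := by rwa [hr_def, ← div_eq_mul_inv, one_lt_div hr]
      linarith
    have hsum_pos := hsum_w.tsum_pos (fun k => by positivity) 0 (by positivity)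
    refine ⟨_, Real.rpow_pos_of_pos hsum_pos (1 / r), fun ψ hψ => ?_⟩
    have hweight := summable_and_tsum_rpow_le_of_weight htriple
      (fun k => by positivity) (fun k => norm_nonneg (ψ k)) hsum_w (by simpa using hψ)
    simpa only [Real.rpow_two, Real.sqrt_eq_rpow, mul_comm] using hweight

end SobolevEmbedding

theorem le_two_of_holderConjugate {p q : ℝ} (h : p.HolderConjugate q) (hp : 2 ≤ p) : q ≤ 2 := by
  have hinv : p⁻¹ ≤ 2⁻¹ := inv_anti₀ two_pos hp
  rw [← inv_le_inv₀ two_pos h.symm.pos, ← h.one_sub_inv]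
  linarith

theorem stmt_0_general {E F : Type*} [SeminormedAddCommGroup E] [SeminormedAddCommGroup F]
    (n : ℕ) (hn : 1 ≤ n) (s₁ : ℝ) (hs₁ : 1 / 2 - 1 / (2 * n) < s₁) :
    ∃ C > (0 : ℝ), ∀ (f : (Fin n → ℤ) × (Fin n → ℤ) → F) (A : ℝ),
      (∀ p, ‖f p‖ ≤ A) →
      ∀ ψ : ℤ → E,
        Summable (fun k : ℤ => (1 + (k : ℝ) ^ 2) ^ s₁ * ‖ψ k‖ ^ 2) →
        Summable (fun p : ZeroMomentum (Fin n) (Fin n) ℤ =>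
            ‖f p.val‖ * ((∏ i, ‖ψ (p.val.1 i)‖) * ∏ i, ‖ψ (p.val.2 i)‖)) ∧
        (∑' p : ZeroMomentum (Fin n) (Fin n) ℤ,
            ‖f p.val‖ * ((∏ i, ‖ψ (p.val.1 i)‖) * ∏ i, ‖ψ (p.val.2 i)‖))
          ≤ C * A * (∑' k : ℤ, (1 + (k : ℝ) ^ 2) ^ s₁ * ‖ψ k‖ ^ 2) ^ n := by
  have hcard : Fintype.card (Fin n ⊕ Fin n) = 2 * n := by simp [two_mul]
  have hn₂ : (2 : ℝ) ≤ 2 * n := by exact_mod_cast Nat.mul_le_mul_left 2 hn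
  have hp := Real.HolderConjugate.conjExponent (one_lt_two.trans_le hn₂)
  set p := Real.conjExponent (2 * n)
  have hs : 1 / p - 1 / 2 < s₁ := by
    rw [one_div p, ← hp.one_sub_inv, inv_eq_one_div]
    linarith
  obtain ⟨C, hC, hembed⟩ := exists_summable_and_tsum_norm_rpow_le_sobolev E hp.symm.pos
    (le_two_of_holderConjugate hp hn₂) hs
  refine ⟨C ^ (2 * n), by positivity, fun f A hf ψ hψ => ?_⟩
  have hA : 0 ≤ A := (norm_nonneg _).trans (hf 0)
  obtain ⟨hsum, hle⟩ := hembed ψ hψ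
  obtain ⟨hsum_prod, hprod⟩ := ZeroMomentum.summable_and_tsum_prod_le (ι := Fin n) (κ := Fin n)
    (by simpa [hcard] using hp) (fun k => norm_nonneg (ψ k)) hsum
  obtain ⟨hsummable, hbound⟩ := summable_and_tsum_norm_mul_le
    (fun k : ZeroMomentum (Fin n) (Fin n) ℤ => hf k.1) (fun k => by positivity) hsum_prod
  refine ⟨hsummable, hbound.trans ?_⟩
  set U := ∑' k : ℤ, (1 + (k : ℝ) ^ 2) ^ s₁ * ‖ψ k‖ ^ 2
  calc A * ∑' k : ZeroMomentum (Fin n) (Fin n) ℤ, (∏ i, ‖ψ (k.1.1 i)‖) * ∏ i, ‖ψ (k.1.2 i)‖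
      ≤ A * (C * √U) ^ (2 * n) := by
        rw [hcard] at hprod
        gcongr
        exact hprod.trans (pow_le_pow_left₀ (by positivity) hle _)
    _ = C ^ (2 * n) * A * U ^ n := by
        rw [mul_pow, pow_mul √U, Real.sq_sqrt (tsum_nonneg fun k => by positivity)]
        ring

/-- For `n ≥ 1` and `1/2 - 1/(2n) < s₁ < 1/2` there is `C > 0` such that for any
bounded family of coefficients `f` indexed by `ℤ^{2n}` (written as a pair of vectors in `ℤ^n`)
and any `ψ` with finite `H^{s₁}` norm, the sum over zero-momentum multi-indices of
`|f_k| ∏ |ψ_{k_i}|` converges and is bounded by `C · A · ‖ψ‖_{H^{s₁}}^{2n}`. -/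
theorem stmt_0 (n : ℕ) (hn : 1 ≤ n) (s₁ : ℝ)
    (hs₁ : 1 / 2 - 1 / (2 * n) < s₁) (hs₁' : s₁ < 1 / 2) :
    ∃ C > (0 : ℝ), ∀ (f : (Fin n → ℤ) × (Fin n → ℤ) → ℂ) (A : ℝ),
      (∀ p, ‖f p‖ ≤ A) →
      ∀ ψ : ℤ → ℂ,
        Summable (fun k : ℤ => (1 + (k : ℝ) ^ 2) ^ s₁ * ‖ψ k‖ ^ 2) →
        Summable (fun p : {p : (Fin n → ℤ) × (Fin n → ℤ) // ∑ i, p.1 i = ∑ i, p.2 i} =>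
            ‖f p.val‖ * ((∏ i, ‖ψ (p.val.1 i)‖) * ∏ i, ‖ψ (p.val.2 i)‖)) ∧
        (∑' p : {p : (Fin n → ℤ) × (Fin n → ℤ) // ∑ i, p.1 i = ∑ i, p.2 i},
            ‖f p.val‖ * ((∏ i, ‖ψ (p.val.1 i)‖) * ∏ i, ‖ψ (p.val.2 i)‖))
          ≤ C * A * (∑' k : ℤ, (1 + (k : ℝ) ^ 2) ^ s₁ * ‖ψ k‖ ^ 2) ^ n :=
  stmt_0_general n hn s₁ hs₁
end

section
/- Let n, m ≥ 1 be integers and M ≥ 1. There exists a constant C = C(n,m,M) > 0 such that for every 𝚔 ∈ ℤ the following holds. Let k ∈ ℤ^{2n} and j ∈ ℤ^{2m} each satisfy the zero-momentum condition and each satisfy some (M,𝚔)-admissible relation. Assume that the multiset {k_1,…,k_n} ∪ {j_{m+1},…,j_{2m}} equals the multiset {k_{n+1},…,k_{2n}} ∪ {j_1,…,j_m}. Then the multiset {k_1,…,k_n} ∪ {j_{m+1},…,j_{2m}} contains at least two elements (counted with multiplicity) whose absolute value is ≥ |𝚔|/C. -/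
/-- `k ∈ ℤ^{2n}` (written as a pair of vectors in `ℤ^n`) satisfies an `(M,kk)`-admissible
relation: there are integer coefficients of absolute value at most `M` whose combination
with the entries gives `kk`. -/
def AdmissibleRel {n : ℕ} (M : ℝ) (kk : ℤ) (k : (Fin n → ℤ) × (Fin n → ℤ)) : Prop :=
  ∃ a b : Fin n → ℤ, (∀ i, (|a i| : ℝ) ≤ M) ∧ (∀ i, (|b i| : ℝ) ≤ M) ∧
    (∑ i, a i * k.1 i) + (∑ i, b i * k.2 i) = kk

/-!
Subtracting the zero-momentum relation, multiplied by the coefficient of any chosen entry, from an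
admissible relation eliminates that entry at the cost of doubling the bound on the coefficients.
Hence some entry other than the chosen one is at least of the order of `𝚔`, and since the choice was
arbitrary, both `k` and `j` have at least two such entries. The two equal multisets `K₁ ∪ J₂` and
`K₂ ∪ J₁` therefore have at least four of them in total, so each contains at least two.
-/

theorem le_countP_add_of_add_eq_add {α : Type*} {p : α → Prop} [DecidablePred p] {r : ℕ}
    {K₁ K₂ J₁ J₂ : Multiset α} (hK : r ≤ (K₁ + K₂).countP p) (hJ : r ≤ (J₁ + J₂).countP p)
    (h : K₁ + J₂ = K₂ + J₁) : r ≤ (K₁ + J₂).countP p := by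
  have hp := congrArg (Multiset.countP p) h
  simp only [Multiset.countP_add] at hK hJ hp ⊢
  lia

theorem exists_le_card_eq_forall_mem_of_le_countP {α : Type*} {p : α → Prop} [DecidablePred p]
    {r : ℕ} {s : Multiset α} (h : r ≤ s.countP p) :
    ∃ t ≤ s, t.card = r ∧ ∀ x ∈ t, p x := by
  have hpos : 0 < ((s.filter p).powersetCard r).card := by
    rw [Multiset.card_powersetCard, ← Multiset.countP_eq_card_filter]
    exact Nat.choose_pos h
  obtain ⟨t, ht⟩ := Multiset.card_pos_iff_exists_mem.mp hpos
  obtain ⟨hle, hcard⟩ := Multiset.mem_powersetCard.mp ht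
  obtain ⟨hts, htp⟩ := Multiset.le_filter.mp hle
  exact ⟨t, hts, hcard, htp⟩

section

open Finset

variable {𝕜 E ι κ : Type*} [SeminormedRing 𝕜] [SeminormedAddCommGroup E] [Module 𝕜 E]
  [Fintype ι] [Fintype κ]

variable (𝕜) in
/-- The relation `AdmissibleRel` for entries in a seminormed module over `𝕜`, with coefficients in
`𝕜` of norm at most `M`; for `𝕜 = E = ℤ` and `ι = Fin n` it unfolds to `AdmissibleRel`. -/
def NormedAdmissibleRel (M : ℝ) (v : E) (k : (ι → E) × (ι → E)) : Prop :=
  ∃ a b : ι → 𝕜, (∀ i, ‖a i‖ ≤ M) ∧ (∀ i, ‖b i‖ ≤ M) ∧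
    ∑ i, a i • k.1 i + ∑ i, b i • k.2 i = v

theorem NormedAdmissibleRel.nonneg [Nonempty ι] {M : ℝ} {v : E} {k : (ι → E) × (ι → E)}
    (hk : NormedAdmissibleRel 𝕜 M v k) : 0 ≤ M :=
  let ⟨_, _, ha, _⟩ := hk
  (norm_nonneg _).trans (ha (Classical.arbitrary ι))

variable [IsBoundedSMul 𝕜 E]

theorem exists_ne_norm_sum_smul_le_of_sum_eq_zero [Nontrivial ι] {D : ℝ} {c : ι → 𝕜} {x : ι → E}
    {i : ι} (hc : ∀ l, ‖c l - c i‖ ≤ D) (hx : ∑ l, x l = 0) :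
    ∃ j ≠ i, ‖∑ l, c l • x l‖ ≤ Fintype.card ι * D * ‖x j‖ := by
  classical
  obtain ⟨j, hj, hmax⟩ :=
    (univ.erase i).exists_max_image (‖x ·‖) (univ_nontrivial.erase_nonempty)
  have hterm (l : ι) : ‖(c l - c i) • x l‖ ≤ D * ‖x j‖ := by
    have hD : 0 ≤ D := (norm_nonneg _).trans (hc i)
    obtain rfl | hl := eq_or_ne l i
    · simpa using by positivity
    · calc ‖(c l - c i) • x l‖ ≤ ‖c l - c i‖ * ‖x l‖ := norm_smul_le _ _
        _ ≤ D * ‖x j‖ := by gcongr; exacts [hc l, hmax l (by simpa using hl)]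
  refine ⟨j, ne_of_mem_erase hj, ?_⟩
  calc ‖∑ l, c l • x l‖ = ‖∑ l, (c l - c i) • x l‖ := by
        simp only [sub_smul, sum_sub_distrib, ← smul_sum, hx, smul_zero, sub_zero]
    _ ≤ ∑ _l : ι, D * ‖x j‖ := norm_sum_le_of_le _ fun l _ => hterm l
    _ = Fintype.card ι * D * ‖x j‖ := by
        rw [sum_const, card_univ, nsmul_eq_mul, mul_assoc]

theorem one_lt_card_filter_norm_sum_smul_le_of_sum_eq_zero [Nontrivial ι] {D : ℝ} {c : ι → 𝕜}
    {x : ι → E} (hc : ∀ i j, ‖c i - c j‖ ≤ D) (hx : ∑ i, x i = 0) :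
    1 < #{i | ‖∑ l, c l • x l‖ ≤ Fintype.card ι * D * ‖x i‖} := by
  have hex (i : ι) := exists_ne_norm_sum_smul_le_of_sum_eq_zero (hc · i) hx
  obtain ⟨i, -, hi⟩ := hex (Classical.arbitrary ι)
  obtain ⟨j, hji, hj⟩ := hex i
  exact one_lt_card.mpr ⟨i, by simpa using hi, j, by simpa using hj, hji.symm⟩

theorem NormedAdmissibleRel.two_le_countP_norm_le [Nonempty ι] {M C : ℝ} {v : E}
    {k : (ι → E) × (ι → E)} (hrel : NormedAdmissibleRel 𝕜 M v k)
    (hsum : ∑ i, k.1 i = ∑ i, k.2 i) (hC : 4 * M * Fintype.card ι ≤ C) :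
    2 ≤ (univ.val.map k.1 + univ.val.map k.2).countP (‖v‖ ≤ C * ‖·‖) := by
  obtain ⟨a, b, ha, hb, hv⟩ := hrel
  set c : ι ⊕ ι → 𝕜 := Sum.elim a (-b) with hc
  set x : ι ⊕ ι → E := Sum.elim k.1 (-k.2) with hx
  have hcM : ∀ s, ‖c s‖ ≤ M := by simpa [hc] using ⟨ha, hb⟩
  have hosc (s t : ι ⊕ ι) : ‖c s - c t‖ ≤ 2 * M :=
    (norm_sub_le_of_le (hcM s) (hcM t)).trans_eq (two_mul M).symm
  have hx0 : ∑ s, x s = 0 := by simp [hx, hsum]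
  have hcx : ∑ s, c s • x s = v := by simp [hc, hx, hv]
  have hcard : (Fintype.card (ι ⊕ ι) : ℝ) * (2 * M) ≤ C := by
    rw [Fintype.card_sum]
    push_cast
    linarith
  have : Nontrivial (ι ⊕ ι) := ⟨.inl (Classical.arbitrary ι), .inr (Classical.arbitrary ι), by simp⟩
  calc 2 ≤ #{s | ‖v‖ ≤ Fintype.card (ι ⊕ ι) * (2 * M) * ‖x s‖} := by
        simpa only [hcx, Nat.succ_le_iff] using
          one_lt_card_filter_norm_sum_smul_le_of_sum_eq_zero hosc hx0
    _ ≤ #{s | ‖v‖ ≤ C * ‖x s‖} :=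
        card_le_card <| monotone_filter_right _ fun s _ hs => hs.trans (by gcongr)
    _ = (univ.val.map k.1 + univ.val.map k.2).countP (‖v‖ ≤ C * ‖·‖) := by
        rw [Multiset.countP_add, Multiset.countP_map, Multiset.countP_map, card_filter,
          Fintype.sum_sum_type]
        simp only [hx, Sum.elim_inl, Sum.elim_inr, Pi.neg_apply, norm_neg, ← card_filter]
        rfl

theorem stmt_3_general [Nonempty ι] [Nonempty κ] {M : ℝ} {v : E} {k : (ι → E) × (ι → E)}
    {j : (κ → E) × (κ → E)} (hk : ∑ i, k.1 i = ∑ i, k.2 i) (hj : ∑ i, j.1 i = ∑ i, j.2 i)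
    (hkv : NormedAdmissibleRel 𝕜 M v k) (hjv : NormedAdmissibleRel 𝕜 M v j)
    (h : univ.val.map k.1 + univ.val.map j.2 = univ.val.map k.2 + univ.val.map j.1) :
    ∃ S ≤ univ.val.map k.1 + univ.val.map j.2, S.card = 2 ∧
      ∀ x ∈ S, ‖v‖ ≤ 4 * M * max (Fintype.card ι) (Fintype.card κ) * ‖x‖ := by
  have hM := hkv.nonneg
  apply exists_le_card_eq_forall_mem_of_le_countP
  refine le_countP_add_of_add_eq_add (hkv.two_le_countP_norm_le hk ?_)
    (hjv.two_le_countP_norm_le hj ?_) h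
  · gcongr
    exact le_max_left _ _
  · gcongr
    exact le_max_right _ _

end

/-- Let `k ∈ ℤ^{2n}`, `j ∈ ℤ^{2m}` satisfy the zero momentum condition and an
`(M,kk)`-admissible relation each, and assume the multiset `K₁ ∪ J₂` equals `K₂ ∪ J₁`.
Then `K₁ ∪ J₂` contains (with multiplicity) at least two elements of absolute value
`≥ |kk|/C`, where `C = C(n,m,M)` does not depend on `kk`. -/
theorem stmt_3 (n m : ℕ) (hn : 1 ≤ n) (hm : 1 ≤ m) (M : ℝ) (hM : 1 ≤ M) :
    ∃ C > (0 : ℝ), ∀ (kk : ℤ) (k : (Fin n → ℤ) × (Fin n → ℤ)) (j : (Fin m → ℤ) × (Fin m → ℤ)),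
      (∑ i, k.1 i = ∑ i, k.2 i) →
      (∑ i, j.1 i = ∑ i, j.2 i) →
      AdmissibleRel M kk k →
      AdmissibleRel M kk j →
      (Finset.univ.val.map k.1 + Finset.univ.val.map j.2
        = Finset.univ.val.map k.2 + Finset.univ.val.map j.1) →
      ∃ S : Multiset ℤ, S ≤ Finset.univ.val.map k.1 + Finset.univ.val.map j.2 ∧
        Multiset.card S = 2 ∧ ∀ x ∈ S, (|kk| : ℝ) / C ≤ (|x| : ℝ) := by
  have : Nonempty (Fin n) := Fin.pos_iff_nonempty.mp hn
  have : Nonempty (Fin m) := Fin.pos_iff_nonempty.mp hm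
  have hC : 0 < 4 * M * (max n m : ℕ) := by positivity
  refine ⟨_, hC, fun kk k j hk hj hkv hjv h => ?_⟩
  obtain ⟨S, hS, hcard, hbig⟩ := stmt_3_general (𝕜 := ℤ) hk hj hkv hjv h
  simp only [Fintype.card_fin] at hbig
  exact ⟨S, hS, hcard, fun x hx => (div_le_iff₀' hC).mpr (hbig x hx)⟩
end

section
/- Let n ≥ 1 be an integer. There exists a constant C(n) > 0 such that the following holds. Let M ≥ 1, let l_1,…,l_M be pairwise distinct nonzero integers, let m_1,…,m_M be positive integers with m_1+⋯+m_M = n, let b_1,…,b_M be integers not all zero, and let ε > 0. Then ∫_{(0,∞)^M} (∏_{t=1}^M z_t^{m_t}) · 1_{\{ |∑_{t=1}^M b_t z_t / l_t²| < ε \}} · e^{−(z_1+⋯+z_M)} dz_1⋯dz_M ≤ C(n) · (min_{t : b_t ≠ 0} l_t²) · ε. -/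
open MeasureTheory

/-!
Dividing `z ^ m * exp (-z)` by `m !` gives the density of the Gamma distribution of shape `m + 1`
and rate `1`. The integral is therefore `∏ t, (m t)!`, which divides `n !`, times the probability
that a linear combination `∑ t, a t * z t` of independent Gamma variables, with
`a t = b t / l t ^ 2`, lies in `(-ε, ε)`. As these densities are bounded by `1`, freezing all
variables but `z i` bounds that probability by the length `2 * ε / |a i|` of an interval. For `i`
minimizing `l i ^ 2` among the indices with `b i ≠ 0`, integrality of `b i` gives
`1 / |a i| ≤ l i ^ 2`.
-/

open ProbabilityTheory Set
open scoped ENNReal Nat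

section PiMeasure

variable {ι : Type*} {X : ι → Type*} [∀ i, MeasurableSpace (X i)] {μ : ∀ i, Measure (X i)}

theorem lmarginal_prod_eq_prod_lintegral [DecidableEq ι] [∀ i, SigmaFinite (μ i)]
    {f : ∀ i, X i → ℝ≥0∞} (hf : ∀ i, Measurable (f i)) (s : Finset ι) (x : ∀ i, X i) :
    (∫⋯∫⁻_s, (fun y ↦ ∏ i ∈ s, f i (y i)) ∂μ) x = ∏ i ∈ s, ∫⁻ y, f i y ∂μ i := by
  induction s using Finset.induction_on with
  | empty => simp
  | insert i s hi ih =>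
    have integrate_coord (y : ∀ i, X i) :
        ∫⁻ u, ∏ j ∈ insert i s, f j (Function.update y i u j) ∂μ i
          = (∫⁻ u, f i u ∂μ i) * ∏ j ∈ s, f j (y j) := by
      rw [← lintegral_mul_const _ (hf i)]
      refine lintegral_congr fun u ↦ ?_
      rw [Finset.prod_insert hi, Function.update_self]
      congr 1
      exact Finset.prod_congr rfl fun j hj ↦ by
        rw [Function.update_of_ne (ne_of_mem_of_not_mem hj hi)]
    rw [lmarginal_insert' _ (by fun_prop) hi, Finset.prod_insert hi, ← ih]
    simp only [integrate_coord]
    have measurable_prod : Measurable fun y : ∀ i, X i ↦ ∏ j ∈ s, f j (y j) := by fun_prop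
    exact lintegral_const_mul _ (measurable_prod.comp measurable_updateFinset)

variable [Fintype ι]

theorem lintegral_pi_prod_eq_prod_lintegral [∀ i, SigmaFinite (μ i)]
    {f : ∀ i, X i → ℝ≥0∞} (hf : ∀ i, Measurable (f i)) :
    ∫⁻ x, ∏ i, f i (x i) ∂Measure.pi μ = ∏ i, ∫⁻ y, f i y ∂μ i := by
  classical
  rcases isEmpty_or_nonempty (∀ i, X i) with h | ⟨⟨x⟩⟩
  · obtain ⟨i, hi⟩ := isEmpty_pi.1 h
    rw [lintegral_of_isEmpty, Finset.prod_eq_zero (Finset.mem_univ i) (lintegral_of_isEmpty _ _)]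
  · rw [lintegral_eq_lmarginal_univ x, lmarginal_prod_eq_prod_lintegral hf]

theorem pi_withDensity [∀ i, SigmaFinite (μ i)] {f : ∀ i, X i → ℝ≥0∞}
    (hf : ∀ i, Measurable (f i)) [∀ i, SigmaFinite ((μ i).withDensity (f i))] :
    Measure.pi (fun i ↦ (μ i).withDensity (f i))
      = (Measure.pi μ).withDensity fun x ↦ ∏ i, f i (x i) := by
  refine Measure.pi_eq fun s hs ↦ ?_
  rw [withDensity_apply _ (.univ_pi hs), Measure.restrict_pi_pi,
    lintegral_pi_prod_eq_prod_lintegral hf]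
  exact Finset.prod_congr rfl fun i _ ↦ (withDensity_apply _ (hs i)).symm

theorem pi_apply_le_of_forall_preimage_update_le [DecidableEq ι] [∀ i, IsProbabilityMeasure (μ i)]
    {s : Set (∀ i, X i)} (hs : MeasurableSet s) (i : ι) {C : ℝ≥0∞}
    (hC : ∀ x, μ i (Function.update x i ⁻¹' s) ≤ C) : Measure.pi μ s ≤ C := by
  have marginal_le : ∫⋯∫⁻_{i}, s.indicator 1 ∂μ ≤ ∫⋯∫⁻_{i}, (fun _ ↦ C) ∂μ := by
    simp only [lmarginal_singleton, lintegral_const, measure_univ, mul_one]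
    exact fun x ↦ (lintegral_indicator_one (measurable_update x hs)).trans_le (hC x)
  calc Measure.pi μ s = ∫⁻ x, s.indicator 1 x ∂Measure.pi μ := (lintegral_indicator_one hs).symm
    _ ≤ ∫⁻ _, C ∂Measure.pi μ :=
      lintegral_le_of_lmarginal_le {i} (measurable_one.indicator hs) measurable_const marginal_le
    _ = C := by simp

end PiMeasure

theorem volume_setOf_abs_mul_sub_lt {a : ℝ} (ha : a ≠ 0) (c δ : ℝ) :
    volume {x : ℝ | |a * x - c| < δ} = ENNReal.ofReal (2 * δ / |a|) := by
  change volume ((a * ·) ⁻¹' Metric.ball c δ) = _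
  rw [Real.volume_preimage_mul_left ha, Real.volume_ball, ← ENNReal.ofReal_mul (abs_nonneg _),
    abs_inv, inv_mul_eq_div]

theorem pi_setOf_abs_sum_mul_sub_lt_le {ι : Type*} [Fintype ι] {μ : ι → Measure ℝ}
    [∀ t, IsProbabilityMeasure (μ t)] {i : ι} {K : ℝ≥0∞} (hμ : μ i ≤ K • volume) {a : ι → ℝ}
    (ha : a i ≠ 0) (c δ : ℝ) :
    Measure.pi μ {z | |∑ t, a t * z t - c| < δ} ≤ K * ENNReal.ofReal (2 * δ / |a i|) := by
  classical
  have measurable_slab : MeasurableSet {z : ι → ℝ | |∑ t, a t * z t - c| < δ} :=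
    measurableSet_lt (by fun_prop) measurable_const
  refine pi_apply_le_of_forall_preimage_update_le measurable_slab i fun z ↦ ?_
  set c' := c - ∑ t ∈ {i}ᶜ, a t * z t with hc'
  have section_eq :
      Function.update z i ⁻¹' {z | |∑ t, a t * z t - c| < δ} = {x | |a i * x - c'| < δ} := by
    ext x
    have frozen_sum : ∑ t ∈ {i}ᶜ, a t * Function.update z i x t = ∑ t ∈ {i}ᶜ, a t * z t :=
      Finset.sum_congr rfl fun t ht ↦ by rw [Function.update_of_ne (by simpa using ht)]
    have affine : ∑ t, a t * Function.update z i x t - c = a i * x - c' := by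
      rw [Fintype.sum_eq_add_sum_compl i, frozen_sum, Function.update_self, hc']
      ring
    simp only [mem_preimage, mem_ofPred_eq, affine]
  calc μ i (Function.update z i ⁻¹' {z | |∑ t, a t * z t - c| < δ})
      ≤ (K • volume) {x | |a i * x - c'| < δ} := section_eq ▸ hμ _
    _ = K * ENNReal.ofReal (2 * δ / |a i|) := by
      rw [Measure.smul_apply, smul_eq_mul, volume_setOf_abs_mul_sub_lt ha]

section Gamma

theorem rpow_sub_one_mul_exp_neg_le_Gamma {s x : ℝ} (hs : 1 ≤ s) (hx : 0 ≤ x) :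
    x ^ (s - 1) * Real.exp (-x) ≤ Real.Gamma s := by
  have Gamma_integrable := Real.GammaIntegral_convergent (zero_lt_one.trans_le hs)
  calc x ^ (s - 1) * Real.exp (-x) = ∫ t in Ioi x, Real.exp (-t) * x ^ (s - 1) := by
        rw [integral_mul_const, integral_exp_neg_Ioi, mul_comm]
    _ ≤ ∫ t in Ioi x, Real.exp (-t) * t ^ (s - 1) := by
        refine setIntegral_mono_on ((integrableOn_exp_neg_Ioi x).mul_const _)
          (Gamma_integrable.mono_set (Ioi_subset_Ioi hx)) measurableSet_Ioi fun t ht ↦ ?_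
        gcongr
        exact le_of_lt ht
    _ ≤ ∫ t in Ioi 0, Real.exp (-t) * t ^ (s - 1) := by
        refine setIntegral_mono_set Gamma_integrable ?_ (Ioi_subset_Ioi hx).eventuallyLE
        filter_upwards [ae_restrict_mem measurableSet_Ioi] with t ht
        have : 0 < t := ht
        positivity
    _ = Real.Gamma s := (Real.Gamma_eq_integral (zero_lt_one.trans_le hs)).symm

theorem gammaPDFReal_le {s r : ℝ} (hs : 1 ≤ s) (hr : 0 < r) (x : ℝ) :
    gammaPDFReal s r x ≤ r := by
  unfold gammaPDFReal
  split_ifs with hx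
  · have hΓ : 0 < Real.Gamma s := Real.Gamma_pos_of_pos (zero_lt_one.trans_le hs)
    calc r ^ s / Real.Gamma s * x ^ (s - 1) * Real.exp (-(r * x))
        = r * ((r * x) ^ (s - 1) * Real.exp (-(r * x)) / Real.Gamma s) := by
          rw [Real.mul_rpow hr.le hx, Real.rpow_sub_one hr.ne']
          field_simp
      _ ≤ r := mul_le_of_le_one_right hr.le <| (div_le_one hΓ).2 <|
          rpow_sub_one_mul_exp_neg_le_Gamma hs (by positivity)
  · exact hr.le

theorem gammaMeasure_le_smul_volume {s r : ℝ} (hs : 1 ≤ s) (hr : 0 < r) :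
    gammaMeasure s r ≤ ENNReal.ofReal r • volume := by
  rw [← withDensity_const]
  exact withDensity_mono (.of_forall fun x ↦ ENNReal.ofReal_le_ofReal (gammaPDFReal_le hs hr x))

variable {ι : Type*} [Fintype ι] {s : ι → ℝ}

theorem ofReal_prod_rpow_mul_exp_neg_sum_eq_prod_gammaPDF (hs : ∀ t, 0 < s t) {z : ι → ℝ}
    (hz : ∀ t, 0 < z t) :
    ENNReal.ofReal ((∏ t, z t ^ (s t - 1)) * Real.exp (-(∑ t, z t)))
      = ENNReal.ofReal (∏ t, Real.Gamma (s t)) * ∏ t, gammaPDF (s t) 1 (z t) := by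
  have hΓ (t : ι) : 0 < Real.Gamma (s t) := Real.Gamma_pos_of_pos (hs t)
  simp only [gammaPDF]
  rw [← ENNReal.ofReal_prod_of_nonneg fun t _ ↦ gammaPDFReal_nonneg (hs t) one_pos _,
    ← ENNReal.ofReal_mul (Finset.prod_nonneg fun t _ ↦ (hΓ t).le), ← Finset.sum_neg_distrib,
    Real.exp_sum, ← Finset.prod_mul_distrib, ← Finset.prod_mul_distrib]
  congr 1
  refine Finset.prod_congr rfl fun t _ ↦ ?_
  rw [gammaPDFReal, if_pos (hz t).le, Real.one_rpow, one_mul]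
  have := (hΓ t).ne'
  field_simp

theorem setLIntegral_prod_rpow_mul_exp_neg_sum (hs : ∀ t, 0 < s t) {A : Set (ι → ℝ)}
    (hA : MeasurableSet A) (hpos : ∀ z ∈ A, ∀ t, 0 < z t) :
    ∫⁻ z in A, ENNReal.ofReal ((∏ t, z t ^ (s t - 1)) * Real.exp (-(∑ t, z t)))
      = ENNReal.ofReal (∏ t, Real.Gamma (s t)) * Measure.pi (fun t ↦ gammaMeasure (s t) 1) A := by
  have measurable_density (t : ι) : Measurable (gammaPDF (s t) 1) :=
    (measurable_gammaPDFReal _ _).ennreal_ofReal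
  have (t : ι) : IsProbabilityMeasure (volume.withDensity (gammaPDF (s t) 1)) :=
    isProbabilityMeasure_gammaMeasure (hs t) one_pos
  simp only [gammaMeasure]
  rw [pi_withDensity measurable_density, withDensity_apply _ hA, ← volume_pi,
    ← lintegral_const_mul _ (by fun_prop)]
  exact setLIntegral_congr_fun hA fun z hz ↦
    ofReal_prod_rpow_mul_exp_neg_sum_eq_prod_gammaPDF hs (hpos z hz)

theorem setLIntegral_abs_sum_mul_lt_prod_rpow_mul_exp_neg_sum_le (hs : ∀ t, 0 < s t) {i : ι}
    (hi : 1 ≤ s i) {a : ι → ℝ} (ha : a i ≠ 0) (δ : ℝ) :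
    ∫⁻ z in {z : ι → ℝ | (∀ t, 0 < z t) ∧ |∑ t, a t * z t| < δ},
        ENNReal.ofReal ((∏ t, z t ^ (s t - 1)) * Real.exp (-(∑ t, z t)))
      ≤ ENNReal.ofReal ((∏ t, Real.Gamma (s t)) * (2 * δ / |a i|)) := by
  have (t : ι) : IsProbabilityMeasure (gammaMeasure (s t) 1) :=
    isProbabilityMeasure_gammaMeasure (hs t) one_pos
  have measurable_domain :
      MeasurableSet {z : ι → ℝ | (∀ t, 0 < z t) ∧ |∑ t, a t * z t| < δ} := by
    measurability
  have slab_le := pi_setOf_abs_sum_mul_sub_lt_le (μ := fun t ↦ gammaMeasure (s t) 1)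
    (gammaMeasure_le_smul_volume hi one_pos) ha 0 δ
  simp only [sub_zero, ENNReal.ofReal_one, one_mul] at slab_le
  rw [setLIntegral_prod_rpow_mul_exp_neg_sum hs measurable_domain fun z hz ↦ hz.1,
    ENNReal.ofReal_mul (Finset.prod_nonneg fun t _ ↦ (Real.Gamma_pos_of_pos (hs t)).le)]
  gcongr
  exact (measure_mono fun z hz ↦ hz.2).trans slab_le

end Gamma

theorem stmt_4_general {ι : Type*} [Fintype ι] {l : ι → ℝ} (hl : ∀ t, l t ≠ 0) (m : ι → ℕ)
    (b : ι → ℤ) {ε : ℝ} (hε : 0 < ε) (hne : (Finset.univ.filter fun t ↦ b t ≠ 0).Nonempty) :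
    ∫⁻ z in {z : ι → ℝ | (∀ t, 0 < z t) ∧ |∑ t, (b t : ℝ) * z t / l t ^ 2| < ε},
        ENNReal.ofReal ((∏ t, z t ^ m t) * Real.exp (-(∑ t, z t)))
      ≤ ENNReal.ofReal (2 * (∑ t, m t)! *
          (Finset.univ.filter fun t ↦ b t ≠ 0).inf' hne (fun t ↦ l t ^ 2) * ε) := by
  obtain ⟨i, hi, hmin⟩ := Finset.exists_mem_eq_inf' hne fun t ↦ l t ^ 2
  have hbi : b i ≠ 0 := (Finset.mem_filter.1 hi).2
  have one_le_abs_b : (1 : ℝ) ≤ |(b i : ℝ)| := mod_cast Int.one_le_abs hbi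
  have sq_pos_l : 0 < l i ^ 2 := sq_pos_of_ne_zero (hl i)
  have slab_le := setLIntegral_abs_sum_mul_lt_prod_rpow_mul_exp_neg_sum_le
    (s := fun t ↦ (m t : ℝ) + 1) (fun t ↦ by positivity) (i := i) (by simp)
    (a := fun t ↦ b t / l t ^ 2) (div_ne_zero (mod_cast hbi) sq_pos_l.ne') ε
  simp only [add_sub_cancel_right, Real.rpow_natCast, Real.Gamma_nat_eq_factorial,
    div_mul_eq_mul_div] at slab_le
  have prod_factorial_le : ∏ t, ((m t)! : ℝ) ≤ (∑ t, m t)! := mod_cast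
    Nat.le_of_dvd (Nat.factorial_pos _) (Nat.prod_factorial_dvd_factorial_sum _ _)
  have width_le : 2 * ε / |(b i : ℝ) / l i ^ 2| ≤ 2 * ε * l i ^ 2 := by
    rw [abs_div, abs_of_pos sq_pos_l, div_div_eq_mul_div]
    exact div_le_self (by positivity) one_le_abs_b
  rw [hmin]
  refine slab_le.trans (ENNReal.ofReal_le_ofReal ?_)
  calc (∏ t, ((m t)! : ℝ)) * (2 * ε / |(b i : ℝ) / l i ^ 2|)
      ≤ (∑ t, m t)! * (2 * ε * l i ^ 2) := by gcongr
    _ = 2 * (∑ t, m t)! * l i ^ 2 * ε := by ring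

/-- small–denominator measure estimate.  For `n ≥ 1` there is `C(n) > 0` such that
for pairwise distinct nonzero integers `l₁,…,l_M`, positive integers `m₁+⋯+m_M = n`, integers
`b₁,…,b_M` not all zero, and `ε > 0`,
`∫_{(0,∞)^M} (∏ z_t^{m_t}) 1_{|∑ b_t z_t / l_t²| < ε} e^{-∑ z_t} dz ≤ C(n) (min_{b_t ≠ 0} l_t²) ε`. -/
theorem stmt_4 (n : ℕ) (hn : 1 ≤ n) :
    ∃ C > (0 : ℝ), ∀ (M : ℕ) (_ : 1 ≤ M) (l : Fin M → ℤ) (m : Fin M → ℕ) (b : Fin M → ℤ)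
      (ε : ℝ) (_ : 0 < ε),
      Function.Injective l → (∀ t, l t ≠ 0) → (∀ t, 0 < m t) → (∑ t, m t = n) →
      ∀ hne : (Finset.univ.filter fun t => b t ≠ 0).Nonempty,
      (∫⁻ z : Fin M → ℝ in
          {z | (∀ t, 0 < z t) ∧ |∑ t, (b t : ℝ) * z t / (l t : ℝ) ^ 2| < ε},
          ENNReal.ofReal ((∏ t, z t ^ m t) * Real.exp (-(∑ t, z t))))
        ≤ ENNReal.ofReal
            (C * (((Finset.univ.filter fun t => b t ≠ 0).inf' hne fun t => (l t : ℝ) ^ 2)) * ε) := by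
  refine ⟨2 * n !, by positivity, ?_⟩
  rintro M - l m b ε hε - hl - rfl hne
  exact stmt_4_general (fun t ↦ mod_cast hl t) m b hε hne
end

section
/- Let n ≥ 1 be an integer. Then ∑ 1/( ∏_{i=1}^n (1+k_i²)(1+j_{n+i}²) ) ≤ ((2n)!)² · (∑_{l∈ℤ} 1/(1+l²))^{2n}, where the sum runs over all pairs (k, j) ∈ ℤ^{2n} × ℤ^{2n} such that both k and j satisfy the zero-momentum condition and the multiset {k_1,…,k_n} ∪ {j_{n+1},…,j_{2n}} equals the multiset {k_{n+1},…,k_{2n}} ∪ {j_1,…,j_n}. In particular this sum converges. -/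
/-- Pairs `(k,j) ∈ ℤ^{2n} × ℤ^{2n}` (each written as a pair of vectors in `ℤ^n`) such that
both satisfy the zero-momentum condition and the multiset `K₁ ∪ J₂` equals the multiset
`K₂ ∪ J₁`. -/
def PairIdx (n : ℕ) : Type :=
  {p : ((Fin n → ℤ) × (Fin n → ℤ)) × ((Fin n → ℤ) × (Fin n → ℤ)) //
    (∑ i, p.1.1 i = ∑ i, p.1.2 i) ∧ (∑ i, p.2.1 i = ∑ i, p.2.2 i) ∧
    (Finset.univ.val.map p.1.1 + Finset.univ.val.map p.2.2
      = Finset.univ.val.map p.1.2 + Finset.univ.val.map p.2.1)}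

/-!
The multiset identity says that the family `K₂ ∪ J₁` is a rearrangement of `K₁ ∪ J₂`. Hence each
value of `(K₁, J₂)` occurs for at most `(2n)!` pairs, and the summand depends on `(K₁, J₂)` alone.
Summing it freely over all such families factors into the `2n`-th power of `∑ 1/(1+l²)`.
-/

theorem exists_equiv_comp_eq_of_map_univ_eq {ι κ α : Type*} [Fintype ι] [Fintype κ]
    {a : ι → α} {b : κ → α} (h : Finset.univ.val.map a = Finset.univ.val.map b) :
    ∃ e : κ ≃ ι, a ∘ e = b := by
  classical
  have fiber_equiv (x : α) : Nonempty ({i // b i = x} ≃ {i // a i = x}) := by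
    refine ⟨Fintype.equivOfCardEq ?_⟩
    have hcount := congrArg (Multiset.count x) h
    simp only [Multiset.count_map] at hcount
    simpa only [Fintype.card_subtype, Finset.card_def, Finset.filter_val, eq_comm (b := x)]
      using hcount.symm
  let e (x : α) := (fiber_equiv x).some
  exact ⟨Equiv.ofFiberEquiv e, funext (Equiv.ofFiberEquiv_map e)⟩

theorem map_univ_sumElim {ι κ α : Type*} [Fintype ι] [Fintype κ] (a : ι → α) (b : κ → α) :
    Finset.univ.val.map (Sum.elim a b) = Finset.univ.val.map a + Finset.univ.val.map b := by
  simp only [← Finset.univ_disjSum_univ, Finset.val_disjSum, Multiset.map_disjSum,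
    Sum.elim_inl, Sum.elim_inr]

theorem card_le_factorial_of_forall_map_univ_eq {ι α : Type*} [Fintype ι] (a : ι → α)
    {s : Finset (ι → α)} (hs : ∀ b ∈ s, Finset.univ.val.map a = Finset.univ.val.map b) :
    s.card ≤ (Fintype.card ι).factorial := by
  classical
  have hsub : s ⊆ Finset.univ.image fun σ : Equiv.Perm ι => a ∘ σ := fun b hb => by
    obtain ⟨σ, hσ⟩ := exists_equiv_comp_eq_of_map_univ_eq (hs b hb)
    exact Finset.mem_image.2 ⟨σ, Finset.mem_univ σ, hσ⟩
  calc s.card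
      ≤ (Finset.univ.image fun σ : Equiv.Perm ι => a ∘ σ).card := Finset.card_le_card hsub
    _ ≤ (Finset.univ : Finset (Equiv.Perm ι)).card := Finset.card_image_le
    _ = (Fintype.card ι).factorial := Fintype.card_perm

theorem sum_prod_le_prod_tsum {ι : Type*} [Fintype ι] {α : ι → Type*} {f : ∀ i, α i → ℝ}
    (hf : ∀ i, 0 ≤ f i) (hsum : ∀ i, Summable (f i)) (s : Finset (∀ i, α i)) :
    ∑ a ∈ s, ∏ i, f i (a i) ≤ ∏ i, ∑' l, f i l := by
  classical
  let values (i : ι) : Finset (α i) := s.image fun a => a i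
  have hsub : s ⊆ Fintype.piFinset values := fun a ha =>
    Fintype.mem_piFinset.2 fun i => Finset.mem_image_of_mem (fun a => a i) ha
  calc ∑ a ∈ s, ∏ i, f i (a i)
      ≤ ∑ a ∈ Fintype.piFinset values, ∏ i, f i (a i) :=
        Finset.sum_le_sum_of_subset_of_nonneg hsub fun a _ _ =>
          Finset.prod_nonneg fun i _ => hf i (a i)
    _ = ∏ i, ∑ l ∈ values i, f i l := (Finset.prod_univ_sum values f).symm
    _ ≤ ∏ i, ∑' l, f i l :=
        Finset.prod_le_prod (fun i _ => Finset.sum_nonneg fun l _ => hf i l)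
          fun i _ => (hsum i).sum_le_tsum _ fun l _ => hf i l

theorem sum_prod_le_factorial_mul_tsum_pow {ι α β : Type*} [Fintype ι] {f : α → ℝ}
    (hf : 0 ≤ f) (hsum : Summable f) {a b : β → ι → α}
    (hinj : Function.Injective fun x => (a x, b x))
    (hab : ∀ x, Finset.univ.val.map (a x) = Finset.univ.val.map (b x)) (s : Finset β) :
    ∑ x ∈ s, ∏ i, f (a x i)
      ≤ (Fintype.card ι).factorial * (∑' l, f l) ^ Fintype.card ι := by
  classical
  have card_fiber_le (c : ι → α) :
      (s.filter fun x => a x = c).card ≤ (Fintype.card ι).factorial := by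
    have b_injOn : Set.InjOn b (s.filter fun x => a x = c) := fun x hx y hy hxy =>
      hinj (Prod.ext ((Finset.mem_filter.1 hx).2.trans (Finset.mem_filter.1 hy).2.symm) hxy)
    rw [← Finset.card_image_of_injOn b_injOn]
    refine card_le_factorial_of_forall_map_univ_eq c (Finset.forall_mem_image.2 fun x hx => ?_)
    rw [← (Finset.mem_filter.1 hx).2, hab]
  calc ∑ x ∈ s, ∏ i, f (a x i)
      = ∑ c ∈ s.image a, (s.filter fun x => a x = c).card • ∏ i, f (c i) :=
        Finset.sum_comp (fun c => ∏ i, f (c i)) a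
    _ ≤ ∑ c ∈ s.image a, (Fintype.card ι).factorial • ∏ i, f (c i) :=
        Finset.sum_le_sum fun c _ =>
          nsmul_le_nsmul_left (Finset.prod_nonneg fun i _ => hf (c i)) (card_fiber_le c)
    _ = (Fintype.card ι).factorial * ∑ c ∈ s.image a, ∏ i, f (c i) := by
        rw [← Finset.smul_sum, nsmul_eq_mul]
    _ ≤ (Fintype.card ι).factorial * ∏ _i : ι, ∑' l, f l :=
        mul_le_mul_of_nonneg_left (sum_prod_le_prod_tsum (fun _ => hf) (fun _ => hsum) _)
          (Nat.cast_nonneg _)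
    _ = (Fintype.card ι).factorial * (∑' l, f l) ^ Fintype.card ι := by
        rw [Finset.prod_const, Finset.card_univ]

theorem summable_one_div_one_add_int_sq : Summable fun l : ℤ => 1 / (1 + (l : ℝ) ^ 2) := by
  refine .of_norm_bounded_eventually (Real.summable_one_div_int_pow.2 one_lt_two) ?_
  filter_upwards [(Set.finite_singleton (0 : ℤ)).compl_mem_cofinite] with l (hl : l ≠ 0)
  rw [Real.norm_of_nonneg (by positivity)]
  exact one_div_le_one_div_of_le (by positivity) (by linarith)

/-- The family `q` enumerates distinct pairs `(k, j)`, written `q x = ((K₁, K₂), (J₁, J₂))`. -/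
theorem stmt_15_general {ι α β : Type*} [Fintype ι] {f : α → ℝ} (hf : 0 ≤ f) (hsum : Summable f)
    {q : β → ((ι → α) × (ι → α)) × ((ι → α) × (ι → α))} (hq : Function.Injective q)
    (hmultiset : ∀ x, Finset.univ.val.map (q x).1.1 + Finset.univ.val.map (q x).2.2
      = Finset.univ.val.map (q x).1.2 + Finset.univ.val.map (q x).2.1) :
    Summable (fun x => ∏ i, (f ((q x).1.1 i) * f ((q x).2.2 i))) ∧
    (∑' x, ∏ i, (f ((q x).1.1 i) * f ((q x).2.2 i)))
      ≤ ((2 * Fintype.card ι).factorial : ℝ) * (∑' l, f l) ^ (2 * Fintype.card ι) := by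
  let a (x : β) : ι ⊕ ι → α := Sum.elim (q x).1.1 (q x).2.2
  let b (x : β) : ι ⊕ ι → α := Sum.elim (q x).1.2 (q x).2.1
  have hinj : Function.Injective fun x => (a x, b x) := fun x y hxy => by
    obtain ⟨ha, hb⟩ := Prod.mk.inj hxy
    obtain ⟨hk₁, hj₂⟩ := Sum.elim_eq_iff.1 ha
    obtain ⟨hk₂, hj₁⟩ := Sum.elim_eq_iff.1 hb
    exact hq (Prod.ext (Prod.ext hk₁ hk₂) (Prod.ext hj₁ hj₂))
  have hab (x : β) : Finset.univ.val.map (a x) = Finset.univ.val.map (b x) := by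
    simpa only [a, b, map_univ_sumElim] using hmultiset x
  have prod_eq (x : β) : ∏ i, f (a x i) = ∏ i, (f ((q x).1.1 i) * f ((q x).2.2 i)) := by
    simp only [a, Fintype.prod_sum_type, Sum.elim_inl, Sum.elim_inr, Finset.prod_mul_distrib]
  have hnonneg : 0 ≤ fun x => ∏ i, f (a x i) := fun x => Finset.prod_nonneg fun i _ => hf _
  have hbound := sum_prod_le_factorial_mul_tsum_pow hf hsum hinj hab
  simp only [← prod_eq, two_mul, ← Fintype.card_sum]
  exact ⟨summable_of_sum_le hnonneg hbound, Real.tsum_le_of_sum_le hnonneg hbound⟩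

/-- `∑_{(k,j)} 1/∏_{i=1}^n (1+k_i²)(1+j_{n+i}²) ≤ ((2n)!)² (∑_{l∈ℤ} 1/(1+l²))^{2n}`,
the sum running over pairs of zero-momentum vectors with `K₁ ∪ J₂ = K₂ ∪ J₁` as multisets;
in particular the sum converges. -/
theorem stmt_15 (n : ℕ) (hn : 1 ≤ n) :
    Summable (fun p : PairIdx n =>
        1 / ∏ i, ((1 + (p.val.1.1 i : ℝ) ^ 2) * (1 + (p.val.2.2 i : ℝ) ^ 2))) ∧
    (∑' p : PairIdx n,
        1 / ∏ i, ((1 + (p.val.1.1 i : ℝ) ^ 2) * (1 + (p.val.2.2 i : ℝ) ^ 2)))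
      ≤ ((2 * n).factorial : ℝ) ^ 2 * (∑' l : ℤ, 1 / (1 + (l : ℝ) ^ 2)) ^ (2 * n) := by
  obtain ⟨hsummable, hle⟩ := stmt_15_general (q := fun p : PairIdx n => p.val)
    (fun l => by positivity) summable_one_div_one_add_int_sq Subtype.val_injective
    fun p => p.property.2.2
  simp only [one_div_mul_one_div, Finset.prod_div_distrib, Finset.prod_const_one,
    Fintype.card_fin] at hsummable hle
  refine ⟨hsummable, hle.trans ?_⟩
  gcongr
  exact le_self_pow₀ (mod_cast Nat.factorial_pos _) two_ne_zero
end
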